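/- arXiv:1403.4344 — 3 statements merged into one kernel-verified Lean document; each statement's English description precedes it below -/
import Mathlib

section
/- Let H be a finite-dimensional complex inner product space, U a unitary operator on H, P an orthogonal projection on H, and ψ₀ ∈ H. Then the set Z = {n ∈ ℕ | P U^n ψ₀ = 0} is semilinear, i.e., it is the union of a finite set and finitely many arithmetic progressions of the form {a k + b : k ∈ ℕ} with a ≥ 1. -/
open scoped InnerProductSpace

/-- A subset `Z` of `ℕ` is *semilinear* if it is the union of a finite set and finitely many
arithmetic progressions `{a k + b : k ∈ ℕ}` with `a ≥ 1`. -/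
def Semilinear (Z : Set ℕ) : Prop :=
  ∃ (F : Finset ℕ) (s : Finset (ℕ × ℕ)),
    (∀ q ∈ s, 1 ≤ q.1) ∧
    Z = ↑F ∪ ⋃ q ∈ s, {n : ℕ | ∃ k : ℕ, n = q.1 * k + q.2}

/-!
This is the Skolem–Mahler–Lech argument, for an endomorphism `T` that is algebraic over a field `K`
of characteristic zero. The power of `X` dividing the minimal polynomial of `T` affects only
finitely many `n`, so the sequence may be taken to be `q (u ^ n)` with `q` linear and `u` a unit of
a finite `K`-algebra. Only finitely many elements of `K` enter the minimal polynomials of `u` and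
`u⁻¹`; by Noether normalization and the existence of infinitely many algebraically independent
`p`-adic integers, for a suitable prime `p > 2` they become integral over `ℤ_[p]` in a common
extension of `K` and `ℚ_[p]`, and `u` and `u⁻¹` become integral with them.

Then `u ^ N = 1 + p * w` for some `N > 0` and some integral `w`, so `q (u ^ (r + N * n))` equals
`∑ k, n.choose k * p ^ k * d k` with `d k = q (u ^ r * w ^ k)`. As `k !` divides `p ^ (k / 2)`,
modulo any `p ^ e` this is a polynomial in `n` of degree bounded in terms of `e`. If the sequence
has infinitely many zeros, it has more of them than that degree, and dividing out the monic linear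
factors shows that it vanishes modulo `p ^ e` for every `e`. Hence in each residue class modulo `N`
the zeros are finite in number or fill the whole class.
-/

open Filter Function Polynomial Algebra
open scoped TensorProduct

/-- A set of natural numbers whose indicator sequence is periodic from some index on. -/
def EventuallyPeriodic (Z : Set ℕ) : Prop :=
  ∃ N > 0, ∀ᶠ n in atTop, n + N ∈ Z ↔ n ∈ Z

namespace EventuallyPeriodic

variable {Z : Set ℕ}

theorem of_preimage_add_right (k : ℕ) (h : EventuallyPeriodic ((· + k) ⁻¹' Z)) :
    EventuallyPeriodic Z := by
  obtain ⟨N, hN, hper⟩ := h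
  refine ⟨N, hN, ?_⟩
  rw [← map_add_atTop_eq_nat k, eventually_map]
  filter_upwards [hper] with n hn
  simpa only [Set.mem_preimage, add_right_comm] using hn

theorem semilinear (h : EventuallyPeriodic Z) : Semilinear Z := by
  classical
  obtain ⟨N, hN, hper⟩ := h
  obtain ⟨k, hk⟩ := eventually_atTop.1 hper
  have mem_iff (b : ℕ) (hb : k ≤ b) (j : ℕ) : N * j + b ∈ Z ↔ b ∈ Z := by
    induction j with
    | zero => simp
    | succ j ih => rw [← ih, ← hk (N * j + b) (by lia), mul_add_one, add_right_comm]
  refine ⟨(Finset.range k).filter (· ∈ Z),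
    ((Finset.Ico k (k + N)).filter (· ∈ Z)).image (Prod.mk N), by simp; lia, Set.ext fun m ↦ ?_⟩
  simp only [Finset.coe_filter, Finset.mem_range, Finset.mem_image, Finset.mem_filter,
    Finset.mem_Ico, Set.mem_union, Set.mem_iUnion, Set.mem_ofPred_eq, exists_prop]
  constructor
  · intro hm
    rcases lt_or_ge m k with hmk | hkm
    · exact .inl ⟨hmk, hm⟩
    · have hdecomp : m = N * ((m - k) / N) + (k + (m - k) % N) := by
        have := Nat.div_add_mod (m - k) N
        lia
      refine .inr ⟨_, ⟨k + (m - k) % N, ⟨⟨by lia, by gcongr; exact Nat.mod_lt _ hN⟩, ?_⟩, rfl⟩,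
        _, hdecomp⟩
      rwa [hdecomp, mem_iff _ (by lia)] at hm
  · rintro (⟨-, hm⟩ | ⟨_, ⟨b, ⟨⟨hb, -⟩, hbZ⟩, rfl⟩, j, rfl⟩)
    exacts [hm, (mem_iff b hb j).2 hbZ]

end EventuallyPeriodic

theorem eventually_add_mem_iff_of_residue_classes {Z : Set ℕ} {N : ℕ} (hN : 0 < N)
    (h : ∀ r, {n | r + N * n ∈ Z}.Infinite → ∀ n, r + N * n ∈ Z) :
    ∀ᶠ n in atTop, n + N ∈ Z ↔ n ∈ Z := by
  have residue (r : ℕ) : ∀ᶠ n in atTop, r + N * (n + 1) ∈ Z ↔ r + N * n ∈ Z := by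
    by_cases hr : {n | r + N * n ∈ Z}.Finite
    · have hn : ∀ᶠ n in atTop, r + N * n ∉ Z :=
        Nat.cofinite_eq_atTop ▸ hr.eventually_cofinite_notMem
      filter_upwards [hn, (tendsto_add_atTop_nat 1).eventually hn] with n hn hn'
      exact iff_of_false hn' hn
    · exact .of_forall fun n ↦ iff_of_true (h r hr _) (h r hr n)
  have hall : ∀ᶠ n in atTop, ∀ r ∈ Finset.range N, r + N * (n + 1) ∈ Z ↔ r + N * n ∈ Z :=
    (eventually_all_finset _).2 fun r _ ↦ residue r
  filter_upwards [(Nat.tendsto_div_const_atTop hN.ne').eventually hall] with n hn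
  have := hn (n % N) (Finset.mem_range.2 (Nat.mod_lt n hN))
  rwa [mul_add_one, ← add_assoc, Nat.mod_add_div] at this

theorem eval_mem_of_degree_map_mk_lt_card_isRoot {R : Type*} [CommRing R] [IsDomain R] {I : Ideal R}
    {f : R[X]} {t : Finset R} (ht : ∀ a ∈ t, f.IsRoot a)
    (hf : (f.map (Ideal.Quotient.mk I)).degree < t.card) (x : R) : f.eval x ∈ I := by
  rcases eq_or_ne f 0 with rfl | hf0
  · simp
  have hdvd : ∏ a ∈ t, (X - C a) ∣ f :=
    (Multiset.prod_X_sub_C_dvd_iff_le_roots hf0 t.val).2 <|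
      (Multiset.le_iff_subset t.nodup).2 fun a ha ↦ (mem_roots hf0).2 (ht a ha)
  have hmonic : (∏ a ∈ t, (X - C a)).Monic := monic_prod_X_sub_C _ _
  have hzero : f.map (Ideal.Quotient.mk I) = 0 := by
    nontriviality R ⧸ I
    by_contra hne
    refine (hmonic.map _).not_dvd_of_degree_lt hne ?_ (Polynomial.map_dvd _ hdvd)
    rw [hmonic.degree_map, degree_prod]
    simpa using hf
  rw [← Ideal.Quotient.eq_zero_iff_mem, ← eval_map_apply, hzero, eval_zero]

theorem eq_zero_of_infinite_zeros_of_sum_descFactorial {R : Type*} [CommRing R] [IsDomain R]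
    [CharZero R] (I : Ideal R) [IsHausdorff I R] {b c : ℕ → R}
    (hb : ∀ n, b n = ∑ k ∈ Finset.range (n + 1), n.descFactorial k * c k)
    (hc : ∀ e, ∀ᶠ k in atTop, c k ∈ I ^ e) (hinf : {n | b n = 0}.Infinite) (n : ℕ) : b n = 0 := by
  refine IsHausdorff.haus ‹IsHausdorff I R› _ fun e ↦ ?_
  rw [SModEq.zero, smul_eq_mul, Ideal.mul_top]
  obtain ⟨d, hd⟩ := eventually_atTop.1 (hc e)
  obtain ⟨t, htz, rfl⟩ := hinf.exists_subset_card_eq d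
  let m := n ⊔ t.sup id
  let f : R[X] := ∑ k ∈ Finset.range (m + 1), C (c k) * descPochhammer R k
  have eval_f (j : ℕ) (hj : j ≤ m) : f.eval (j : R) = b j := by
    simp only [f, eval_finsetSum, eval_mul, eval_C, descPochhammer_eval_eq_descFactorial, hb,
      mul_comm (c _)]
    refine (Finset.sum_subset (Finset.range_mono (by lia)) fun k _ hk ↦ ?_).symm
    rw [Nat.descFactorial_of_lt (by simpa using hk), Nat.cast_zero, zero_mul]
  have degree_f : (f.map (Ideal.Quotient.mk (I ^ e))).degree < t.card := by
    rw [Polynomial.map_sum, ← mem_degreeLT]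
    refine Submodule.sum_mem _ fun k _ ↦ ?_
    rw [mem_degreeLT]
    rcases lt_or_ge k t.card with hk | hk
    · refine degree_map_le.trans_lt (degree_le_natDegree.trans_lt (Nat.cast_lt.2 ?_))
      exact (natDegree_C_mul_le _ _).trans_lt (by rwa [descPochhammer_natDegree])
    · rw [Polynomial.map_mul, map_C, Ideal.Quotient.eq_zero_iff_mem.2 (hd k hk), C_0, zero_mul,
        degree_zero]
      exact WithBot.bot_lt_coe _
  rw [← eval_f n le_sup_left]
  refine eval_mem_of_degree_map_mk_lt_card_isRoot (t := t.map Nat.castEmbedding) ?_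
    (by rwa [Finset.card_map]) _
  simp only [Finset.mem_map, forall_exists_index, and_imp, forall_apply_eq_imp_iff₂, IsRoot.def]
  exact fun j hj ↦ (eval_f j (le_sup_of_le_right (Finset.le_sup (f := id) hj))).trans (htz hj)

section PadicInt

variable {p : ℕ} [Fact p.Prime]

theorem natCast_factorial_dvd_pow_half (hp : 2 < p) (k : ℕ) :
    (k.factorial : ℤ_[p]) ∣ (p : ℤ_[p]) ^ (k / 2) := by
  obtain ⟨e, u, hu, hk⟩ := Nat.exists_eq_pow_mul_and_not_dvd k.factorial_ne_zero p (by lia)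
  have he : e ≤ k / 2 := by
    have legendre := sub_one_mul_padicValNat_factorial (p := p) k
    have hval : e ≤ padicValNat p k.factorial :=
      (padicValNat_dvd_iff_le k.factorial_ne_zero).1 (hk ▸ dvd_mul_right _ _)
    have : 2 * padicValNat p k.factorial ≤ (p - 1) * padicValNat p k.factorial := by
      gcongr; lia
    lia
  have hunit : IsUnit (u : ℤ_[p]) := by
    rw [PadicInt.isUnit_iff, PadicInt.norm_natCast_eq_one_iff]
    exact (Fact.out : p.Prime).coprime_iff_not_dvd.2 hu
  rw [hk, Nat.cast_mul, Nat.cast_pow, hunit.mul_right_dvd]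
  exact pow_dvd_pow _ he

theorem eq_zero_of_infinite_zeros_of_sum_choose (hp : 2 < p) {b d : ℕ → ℤ_[p]}
    (hb : ∀ n, b n = ∑ k ∈ Finset.range (n + 1), n.choose k * (p ^ k * d k))
    (hinf : {n | b n = 0}.Infinite) (n : ℕ) : b n = 0 := by
  choose c hc using natCast_factorial_dvd_pow_half (p := p) hp
  refine eq_zero_of_infinite_zeros_of_sum_descFactorial (IsLocalRing.maximalIdeal ℤ_[p])
    (c := fun k ↦ p ^ (k - k / 2) * (c k * d k)) (fun n ↦ ?_) (fun e ↦ ?_) hinf n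
  · refine (hb n).trans (Finset.sum_congr rfl fun k _ ↦ ?_)
    have hpow : (p : ℤ_[p]) ^ k = p ^ (k - k / 2) * (k.factorial * c k) := by
      rw [← hc, ← pow_add, Nat.sub_add_cancel (Nat.div_le_self k 2)]
    rw [Nat.descFactorial_eq_factorial_mul_choose, hpow]
    push_cast
    ring
  · rw [PadicInt.maximalIdeal_eq_span_p, Ideal.span_singleton_pow]
    filter_upwards [eventually_ge_atTop (2 * e)] with k hk
    exact Ideal.mem_span_singleton.2 ((pow_dvd_pow _ (by lia)).mul_right _)

end PadicInt

section PadicAlgebra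

variable {p : ℕ} [Fact p.Prime] {A : Type*} [CommRing A] [Algebra ℤ_[p] A]
  {W : Type*} [AddCommGroup W] [Module ℤ_[p] W]

theorem finite_quotient_span_natCast_prime [Module.Finite ℤ_[p] A] :
    Finite (A ⧸ Ideal.span {(p : A)}) := by
  have : Finite (ℤ_[p] ⧸ Ideal.span {(p : ℤ_[p])}) := by
    rw [← PadicInt.maximalIdeal_eq_span_p]
    exact .of_equiv _ PadicInt.residueField.symm.toEquiv
  have hfin := Module.finite_of_finite (ℤ_[p] ⧸ Ideal.span {(p : ℤ_[p])})
    (M := A ⧸ (Ideal.span {(p : ℤ_[p])}).map (algebraMap ℤ_[p] A))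
  rwa [Ideal.map_span, Set.image_singleton, map_natCast] at hfin

theorem exists_natCast_prime_dvd_pow_sub_one [Module.Finite ℤ_[p] A] (u : Aˣ) :
    ∃ N > 0, (p : A) ∣ u ^ N - 1 := by
  have := finite_quotient_span_natCast_prime (p := p) (A := A)
  let v := Units.map (Ideal.Quotient.mk (Ideal.span {(p : A)})).toMonoidHom u
  refine ⟨Nat.card (A ⧸ Ideal.span {(p : A)})ˣ, Nat.card_pos, ?_⟩
  rw [← Ideal.mem_span_singleton, ← Ideal.Quotient.mk_eq_mk_iff_sub_mem, map_pow, map_one]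
  exact congrArg Units.val (pow_card_eq_one' (x := v))

theorem map_pow_eq_zero_of_infinite_zeros_of_dvd_sub_one_of_scalar (hp : 2 < p) {a : A}
    (ha : (p : A) ∣ a - 1) (q : A →ₗ[ℤ_[p]] ℤ_[p]) (hinf : {n | q (a ^ n) = 0}.Infinite) (n : ℕ) :
    q (a ^ n) = 0 := by
  obtain ⟨w, hw⟩ := ha
  refine eq_zero_of_infinite_zeros_of_sum_choose hp (d := fun k ↦ q (w ^ k)) (fun n ↦ ?_) hinf n
  rw [eq_add_of_sub_eq hw, add_pow, map_sum]
  refine Finset.sum_congr rfl fun k _ ↦ ?_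
  have hterm : (p * w) ^ k * 1 ^ (n - k) * n.choose k = ((n.choose k : ℤ_[p]) * p ^ k) • w ^ k := by
    rw [Algebra.smul_def]
    simp only [map_mul, map_pow, map_natCast]
    ring
  rw [hterm, map_smul, smul_eq_mul, mul_assoc]

theorem map_pow_eq_zero_of_infinite_zeros_of_dvd_sub_one [Module.Finite ℤ_[p] A]
    [Module.IsTorsionFree ℤ_[p] W] (hp : 2 < p) {a : A} (ha : (p : A) ∣ a - 1)
    (q : A →ₗ[ℤ_[p]] W) (hinf : {n | q (a ^ n) = 0}.Infinite) (n : ℕ) : q (a ^ n) = 0 := by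
  let e := Module.finBasis ℤ_[p] q.range
  have zeros (m : ℕ) : q (a ^ m) = 0 ↔ ∀ i, (e.coord i ∘ₗ q.rangeRestrict) (a ^ m) = 0 := by
    simp only [LinearMap.comp_apply, e.forall_coord_eq_zero_iff, Subtype.ext_iff,
      LinearMap.codRestrict_apply, ZeroMemClass.coe_zero]
  exact (zeros n).2 fun i ↦ map_pow_eq_zero_of_infinite_zeros_of_dvd_sub_one_of_scalar hp ha _
    (hinf.mono fun m hm ↦ (zeros m).1 hm i) n

theorem EventuallyPeriodic.setOf_map_unit_pow_eq_zero_of_finite [Module.Finite ℤ_[p] A]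
    [Module.IsTorsionFree ℤ_[p] W] (hp : 2 < p) (u : Aˣ) (q : A →ₗ[ℤ_[p]] W) :
    EventuallyPeriodic {n : ℕ | q (u ^ n) = 0} := by
  obtain ⟨N, hN, hdvd⟩ := exists_natCast_prime_dvd_pow_sub_one (p := p) u
  refine ⟨N, hN, eventually_add_mem_iff_of_residue_classes hN fun r ↦ ?_⟩
  simpa only [LinearMap.comp_apply, LinearMap.mulLeft_apply, ← pow_mul, ← pow_add,
    Set.mem_ofPred_eq] using
    map_pow_eq_zero_of_infinite_zeros_of_dvd_sub_one hp hdvd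
      (q ∘ₗ LinearMap.mulLeft ℤ_[p] (u ^ r : A))

theorem EventuallyPeriodic.setOf_map_unit_pow_eq_zero_of_isIntegral_padicInt
    [Module.IsTorsionFree ℤ_[p] W] (hp : 2 < p) {u : Aˣ} (hu : IsIntegral ℤ_[p] (u : A))
    (hu' : IsIntegral ℤ_[p] (↑u⁻¹ : A)) (q : A →ₗ[ℤ_[p]] W) :
    EventuallyPeriodic {n : ℕ | q (u ^ n) = 0} := by
  let S := Algebra.adjoin ℤ_[p] {(u : A), ↑u⁻¹}
  have : Module.Finite ℤ_[p] S :=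
    Module.Finite.iff_fg.2 (fg_adjoin_of_finite (Set.toFinite _) (by simp [hu, hu']))
  let u' : Sˣ := ⟨⟨u, Algebra.subset_adjoin (by simp)⟩, ⟨↑u⁻¹, Algebra.subset_adjoin (by simp)⟩,
    Subtype.ext u.mul_inv, Subtype.ext u.inv_mul⟩
  exact .setOf_map_unit_pow_eq_zero_of_finite hp u' (q ∘ₗ S.val.toLinearMap)

end PadicAlgebra

universe u w

theorem exists_field_amalgamation {B : Type*} [CommRing B] [IsDomain B] {K : Type u} {L : Type w}
    [Field K] [Field L] {i : B →+* K} {j : B →+* L} (hi : Injective i) (hj : Injective j) :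
    ∃ (Ω : Type (max u w)) (_ : Field Ω) (f : K →+* Ω) (g : L →+* Ω), f.comp i = g.comp j := by
  algebraize [i, j]
  have : Nontrivial (K ⊗[B] L) :=
    TensorProduct.nontrivial_of_algebraMap_injective_of_isDomain B K L hi hj
  obtain ⟨m, hm⟩ := Ideal.exists_maximal (K ⊗[B] L)
  let π := Ideal.Quotient.mkₐ B m
  exact ⟨_, Ideal.Quotient.field m, (π.comp TensorProduct.includeLeft).toRingHom,
    (π.comp TensorProduct.includeRight).toRingHom,
    ((π.comp TensorProduct.includeLeft).comp_algebraMap).trans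
      (π.comp TensorProduct.includeRight).comp_algebraMap.symm⟩

theorem exists_algebraicIndependent_nat (R A : Type*) [CommRing R] [CommRing A] [IsDomain A]
    [Algebra R A] [FaithfulSMul R A] [Countable R] [Uncountable A] :
    ∃ x : ℕ → A, AlgebraicIndependent R x := by
  obtain ⟨ι, x, hx⟩ := exists_isTranscendenceBasis' R A
  suffices Infinite ι from ⟨_, hx.1.comp _ (Infinite.natEmbedding ι).injective⟩
  by_contra! hι
  have : Nontrivial R := (algebraMap R A).domain_nontrivial
  have := hx.isAlgebraic
  have : Countable (MvPolynomial ι R) :=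
    Cardinal.mk_le_aleph0_iff.1 (MvPolynomial.cardinalMk_le_max_lift.trans (by simp))
  have : Countable (adjoin R (Set.range x)) := hx.1.aevalEquiv.symm.toEquiv.injective.countable
  have hle := Algebra.IsAlgebraic.cardinalMk_le_max (adjoin R (Set.range x)) A
  rw [max_eq_right (Cardinal.mk_le_aleph0_iff.2 this), Cardinal.mk_le_aleph0_iff] at hle
  exact not_countable hle

theorem uncountable_padicInt (p : ℕ) [Fact p.Prime] : Uncountable ℤ_[p] := by
  by_contra! h
  have hsurj : Surjective fun a : ℤ_[p] × ℤ_[p] ↦ (a.1 / a.2 : ℚ_[p]) := fun z ↦ by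
    obtain ⟨a, b, -, h⟩ := IsFractionRing.div_surjective (A := ℤ_[p]) z
    exact ⟨(a, b), h⟩
  exact Cardinal.aleph0_lt_continuum.not_ge
    ((continuum_le_cardinal_of_nontriviallyNormedField ℚ_[p]).trans
      (Cardinal.mk_le_aleph0_iff.2 hsurj.countable))

theorem exists_algebraicIndependent_isIntegralElem_smul (R k : Type*) {K : Type*} [CommRing R]
    [Field k] [Algebra R k] [IsFractionRing R k] [CommRing K] [Nontrivial K] [Algebra k K]
    [Algebra R K] [IsScalarTower R k K] (F : Finset K) :
    ∃ (s : ℕ) (x : Fin s → K), AlgebraicIndependent R x ∧ ∀ y ∈ F, ∃ d ∈ nonZeroDivisors R,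
      (MvPolynomial.aeval (R := R) x).toRingHom.IsIntegralElem (d • y) := by
  let A := adjoin k (F : Set K)
  have : FiniteType k A := A.fg_iff_finiteType.1 ⟨F, rfl⟩
  obtain ⟨s, g, hinj, hint⟩ := exists_integral_inj_algHom_of_fg k A
  let x (i : Fin s) : K := g (.X i)
  have hx : MvPolynomial.aeval x = A.val.comp g := MvPolynomial.algHom_ext fun i ↦ by simp [x]
  have indep : AlgebraicIndependent k x := by
    rw [algebraicIndependent_iff_injective_aeval, hx]
    exact Subtype.val_injective.comp hinj
  refine ⟨s, x, indep.restrictScalars (IsFractionRing.injective R k), fun y hy ↦ ?_⟩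
  algebraize [(MvPolynomial.aeval (R := R) x).toRingHom, (MvPolynomial.aeval (R := k) x).toRingHom]
  let := MvPolynomial.algebraMvPolynomial (σ := Fin s) (R := R) (S := k)
  have : IsScalarTower (MvPolynomial (Fin s) R) (MvPolynomial (Fin s) k) K :=
    .of_algebraMap_eq fun f ↦ (MvPolynomial.aeval_map_algebraMap k x f).symm
  have hyk : (MvPolynomial.aeval (R := k) x).toRingHom.IsIntegralElem y := by
    rw [hx]
    exact RingHom.IsIntegralElem.map (hint ⟨y, subset_adjoin hy⟩) A.val.toRingHom
  have := MvPolynomial.isLocalization (σ := Fin s) (nonZeroDivisors R) k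
  obtain ⟨⟨_, d, hd, rfl⟩, hdy⟩ := IsIntegral.exists_multiple_integral_of_isLocalization
    ((nonZeroDivisors R).map (MvPolynomial.C (σ := Fin s))) y hyk
  refine ⟨d, hd, ?_⟩
  have hCd : (MvPolynomial.C d : MvPolynomial (Fin s) R) • y = d • y := by
    simp [Algebra.smul_def, RingHom.algebraMap_toAlgebra]
  exact hCd ▸ hdy

theorem isUnit_intCast_of_natAbs_lt {p : ℕ} [Fact p.Prime] {d : ℤ} (hd : d ≠ 0)
    (hdp : d.natAbs < p) : IsUnit (d : ℤ_[p]) := by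
  rw [PadicInt.isUnit_iff, PadicInt.norm_intCast_eq_one_iff, Int.isCoprime_iff_gcd_eq_one]
  exact (Nat.coprime_of_lt_prime (by simpa using hd) hdp Fact.out).symm

theorem exists_ringHom_isIntegralElem_padicInt {K : Type u} [Field K] [CharZero K] (F : Finset K) :
    ∃ (p : ℕ) (_ : Fact p.Prime) (Ω : Type u) (_ : Field Ω) (f : K →+* Ω) (j : ℤ_[p] →+* Ω),
      2 < p ∧ Injective j ∧ ∀ y ∈ F, j.IsIntegralElem (f y) := by
  obtain ⟨s, x, hx, hint⟩ := exists_algebraicIndependent_isIntegralElem_smul ℤ ℚ F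
  choose! d hd hint using hint
  obtain ⟨p, hle, hprime⟩ := Nat.exists_infinite_primes (2 ⊔ F.sup (fun y ↦ (d y).natAbs) + 1)
  have : Fact p.Prime := ⟨hprime⟩
  have := uncountable_padicInt p
  obtain ⟨t, ht⟩ := exists_algebraicIndependent_nat ℤ ℤ_[p]
  let τ : MvPolynomial (Fin s) ℤ →+* ℤ_[p] := (MvPolynomial.aeval (t ∘ Fin.val)).toRingHom
  have hτ : Injective τ := ht.comp _ Fin.val_injective
  have hι := FaithfulSMul.algebraMap_injective ℤ_[p] ℚ_[p]
  obtain ⟨Ω, _, f, g, hfg⟩ :=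
    exists_field_amalgamation (i := (MvPolynomial.aeval (R := ℤ) x).toRingHom)
      (j := (algebraMap ℤ_[p] ℚ_[p]).comp τ) hx (hι.comp hτ)
  let j : ℤ_[p] →+* Ω := g.comp (algebraMap ℤ_[p] ℚ_[p])
  refine ⟨p, ‹_›, Ω, ‹_›, f, j, by lia, g.injective.comp hι, fun y hy ↦ ?_⟩
  have hlt : (d y).natAbs < p := (Finset.le_sup (f := fun y ↦ (d y).natAbs) hy).trans_lt (by lia)
  obtain ⟨e, he⟩ :=
    (isUnit_intCast_of_natAbs_lt (nonZeroDivisors.ne_zero (hd y hy)) hlt).exists_left_inv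
  have hdy : (j.comp τ).IsIntegralElem (f (d y • y)) := hfg ▸ (hint y hy).map f
  refine .of_mul_unit j (f y) (d y) e (by simpa using congrArg j he) ?_
  simpa [mul_comm] using hdy.of_comp

theorem isIntegral_of_monic_of_isIntegral_coeffs {R K B : Type*} [CommRing R] [CommRing K]
    [CommRing B] [Algebra R B] [Algebra K B] {f : K[X]} (hf : f.Monic)
    (hcoeffs : ∀ c ∈ f.coeffs, IsIntegral R (algebraMap K B c)) {x : B} (hx : aeval x f = 0) :
    IsIntegral R x := by
  nontriviality B
  refine .of_aeval_monic_of_isIntegral_coeff (hf.map (algebraMap K B)) ?_ ?_ fun i ↦ ?_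
  · rw [hf.natDegree_map]
    intro hdeg
    simp [hf.natDegree_eq_zero.1 hdeg] at hx
  · rw [eval_map_algebraMap, hx]
    exact isIntegral_zero
  · rw [coeff_map]
    by_cases hi : f.coeff i = 0
    · simpa only [hi, map_zero] using isIntegral_zero
    · exact hcoeffs _ (coeff_mem_coeffs hi)

theorem exists_linearMap_comp_adjoinRoot_mk {R M : Type*} [CommRing R] [AddCommGroup M] [Module R M]
    {g : R[X]} {L : R[X] →ₗ[R] M} (hL : ∀ h, L (g * h) = 0) :
    ∃ q : AdjoinRoot g →ₗ[R] M, ∀ h, q (AdjoinRoot.mk g h) = L h := by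
  let I := Ideal.span {g}
  have hI : I.restrictScalars R ≤ L.ker := fun f hf ↦ by
    obtain ⟨h, rfl⟩ := Ideal.mem_span_singleton.1 hf
    exact hL h
  exact ⟨(I.restrictScalars R).liftQ L hI ∘ₗ
      (Submodule.Quotient.restrictScalarsEquiv R I).symm.toLinearMap,
    fun _ ↦ rfl⟩

theorem isUnit_adjoinRoot_root {K : Type*} [Field K] {g : K[X]} (hg : ¬ X ∣ g) :
    IsUnit (AdjoinRoot.root g) := by
  obtain ⟨a, b, hab⟩ := irreducible_X.coprime_iff_not_dvd.2 hg
  refine .of_mul_eq_one (AdjoinRoot.mk g a) ?_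
  simpa [mul_comm] using congrArg (AdjoinRoot.mk g) hab

section

variable {K : Type u} [Field K] [CharZero K] {W : Type*} [AddCommGroup W] [Module K W]

theorem EventuallyPeriodic.setOf_map_unit_pow_eq_zero {D : Type*} [CommRing D] [Algebra K D]
    [Algebra.IsIntegral K D] (u : Dˣ) (q : D →ₗ[K] W) :
    EventuallyPeriodic {n : ℕ | q (u ^ n) = 0} := by
  classical
  let coeffs (a : D) := (minpoly K a).coeffs
  obtain ⟨p, _, Ω, _, f, j, hp, hj, hint⟩ :=
    exists_ringHom_isIntegralElem_padicInt (coeffs u ∪ coeffs ↑u⁻¹)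
  algebraize [f, j]
  have : FaithfulSMul ℤ_[p] Ω := (faithfulSMul_iff_algebraMap_injective _ _).2 hj
  let incl : D →ₐ[K] Ω ⊗[K] D := TensorProduct.includeRight
  have isIntegral_incl (a : D) (ha : coeffs a ⊆ coeffs u ∪ coeffs ↑u⁻¹) :
      IsIntegral ℤ_[p] (incl a) := by
    refine isIntegral_of_monic_of_isIntegral_coeffs
      (minpoly.monic (Algebra.IsIntegral.isIntegral (R := K) a)) (fun c hc ↦ ?_)
      (by rw [aeval_algHom_apply, minpoly.aeval, map_zero])
    rw [IsScalarTower.algebraMap_apply K Ω]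
    exact IsIntegral.algebraMap (hint c (ha hc))
  have : Module.IsTorsionFree ℤ_[p] (Ω ⊗[K] W) := .trans_faithfulSMul ℤ_[p] Ω _
  have hper := EventuallyPeriodic.setOf_map_unit_pow_eq_zero_of_isIntegral_padicInt hp
    (u := Units.map incl.toMonoidHom u)
    (isIntegral_incl u Finset.subset_union_left) (isIntegral_incl _ Finset.subset_union_right)
    ((q.baseChange Ω).restrictScalars ℤ_[p])
  convert hper using 3 with n
  simp [incl, Module.FaithfullyFlat.one_tmul_eq_zero_iff]

theorem EventuallyPeriodic.setOf_map_X_pow_eq_zero_of_not_X_dvd {g : K[X]} (hg : ¬ X ∣ g)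
    {L : K[X] →ₗ[K] W} (hL : ∀ h, L (g * h) = 0) : EventuallyPeriodic {n : ℕ | L (X ^ n) = 0} := by
  have hg0 : g ≠ 0 := fun h ↦ hg (h ▸ dvd_zero X)
  have : Module.Finite K (AdjoinRoot g) := (AdjoinRoot.powerBasis hg0).finite
  obtain ⟨u, hu⟩ := isUnit_adjoinRoot_root hg
  obtain ⟨q, hq⟩ := exists_linearMap_comp_adjoinRoot_mk hL
  simpa only [hu, ← AdjoinRoot.mk_X, ← map_pow, hq] using
    EventuallyPeriodic.setOf_map_unit_pow_eq_zero u q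

theorem EventuallyPeriodic.setOf_map_X_pow_eq_zero {f : K[X]} (hf : f ≠ 0)
    {L : K[X] →ₗ[K] W} (hL : ∀ h, L (f * h) = 0) : EventuallyPeriodic {n : ℕ | L (X ^ n) = 0} := by
  obtain ⟨g, hfg, hg⟩ := exists_eq_pow_rootMultiplicity_mul_and_not_dvd f hf 0
  rw [C_0, sub_zero] at hfg hg
  refine .of_preimage_add_right (f.rootMultiplicity 0) ?_
  have hL' (h : K[X]) : (L ∘ₗ LinearMap.mulLeft K (X ^ f.rootMultiplicity 0)) (g * h) = 0 := by
    rw [LinearMap.comp_apply, LinearMap.mulLeft_apply, ← mul_assoc, ← hfg, hL]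
  simpa only [LinearMap.comp_apply, LinearMap.mulLeft_apply, ← pow_add, add_comm,
    Set.preimage_ofPred_eq] using
    setOf_map_X_pow_eq_zero_of_not_X_dvd hg hL'

theorem stmt_5_general {V : Type*} [AddCommGroup V] [Module K V] {T : Module.End K V}
    (hT : IsIntegral K T) (Q : V →ₗ[K] W) (v : V) : Semilinear {n : ℕ | Q ((T ^ n) v) = 0} := by
  let L : K[X] →ₗ[K] W := Q ∘ₗ LinearMap.applyₗ v ∘ₗ (aeval T).toLinearMap
  have hL (h : K[X]) : L (minpoly K T * h) = 0 := by simp [L]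
  simpa [L] using (EventuallyPeriodic.setOf_map_X_pow_eq_zero (minpoly.ne_zero hT) hL).semilinear

end

/-- For a unitary `U` (inner-product-preserving linear map), an orthogonal
projection `P` (idempotent and self-adjoint) and a vector `ψ₀` on a finite-dimensional complex
inner product space, the set `{n | P U^n ψ₀ = 0}` is semilinear. -/
theorem stmt_5 {H : Type*} [NormedAddCommGroup H] [InnerProductSpace ℂ H]
    [FiniteDimensional ℂ H]
    (U : H →ₗ[ℂ] H) (hU : ∀ x y : H, ⟪U x, U y⟫_ℂ = ⟪x, y⟫_ℂ)
    (P : H →ₗ[ℂ] H) (hPidem : P ∘ₗ P = P)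
    (hPsa : ∀ x y : H, ⟪P x, y⟫_ℂ = ⟪x, P y⟫_ℂ)
    (ψ₀ : H) :
    Semilinear {n : ℕ | P ((U ^ n) ψ₀) = 0} :=
  stmt_5_general (Algebra.IsIntegral.isIntegral U) P ψ₀
end

section
/- Let H be a finite-dimensional complex inner product space, U a unitary operator on H, P an orthogonal projection on H, and ψ₀ ∈ H. Let p ≥ 1 satisfy: for all eigenvalues λ, μ of U, if λ/μ is a root of unity then (λ/μ)^p = 1. Suppose there exist integers a ≥ 1 and b ≥ 0 such that P U^{a n + b} ψ₀ = 0 for all n ∈ ℕ. Then, setting r = b mod p, we have P U^{p n + r} ψ₀ = 0 for all n ∈ ℕ. -/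
open scoped InnerProductSpace

/-!
Write `x` as a finite sum of eigenvectors of `f`. On the `μ`-component, passing from `f ^ b` to
`f ^ m` with `m ≡ b [MOD p]` multiplies by `μ ^ m / μ ^ b`. If `μ ^ a = ν ^ a`, then `μ / ν` is a
root of unity, so `(μ / ν) ^ p = 1` and the two multipliers agree. The multiplier is therefore a
function of the eigenvalue `μ ^ a` of `f ^ a`, and Lagrange interpolation gives a polynomial `q`
with `f ^ m x = q(f ^ a) (f ^ b x)`, a linear combination of the vectors `f ^ (a * n + b) x`.
-/

theorem map_aeval_apply_eq_zero {R M N : Type*} [CommSemiring R] [AddCommMonoid M] [Module R M]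
    [AddCommMonoid N] [Module R N] {f : Module.End R M} {g : M →ₗ[R] N} {x : M}
    (h : ∀ n : ℕ, g ((f ^ n) x) = 0) (q : Polynomial R) : g (Polynomial.aeval f q x) = 0 := by
  simp only [Polynomial.aeval_eq_sum_range, LinearMap.sum_apply, LinearMap.smul_apply, map_sum,
    map_smul, h, smul_zero, Finset.sum_const_zero]

theorem not_hasEigenvalue_zero_of_injective {R M : Type*} [CommRing R] [AddCommGroup M]
    [Module R M] {f : Module.End R M} (hf : Function.Injective f) : ¬ f.HasEigenvalue 0 := by
  rwa [Module.End.hasEigenvalue_iff, not_not, Module.End.eigenspace_zero, LinearMap.ker_eq_bot]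

theorem exists_sum_hasEigenvector_eq {R M : Type*} [CommRing R] [AddCommGroup M] [Module R M]
    {f : Module.End R M} {x : M} (hx : x ∈ ⨆ μ, f.eigenspace μ) :
    ∃ (s : Finset R) (v : R → M), (∀ μ ∈ s, f.HasEigenvector μ (v μ)) ∧ ∑ μ ∈ s, v μ = x := by
  obtain ⟨v, hv, hsum⟩ := (Submodule.mem_iSup_iff_exists_finsupp _ _).1 hx
  exact ⟨v.support, v, fun μ hμ => ⟨hv μ, Finsupp.mem_support_iff.1 hμ⟩, hsum⟩

section Field

variable {K V W : Type*} [Field K] [AddCommGroup V] [Module K V] [AddCommGroup W] [Module K W]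

theorem pow_div_pow_eq_of_modEq {z w : K} (hz : z ≠ 0) (hw : w ≠ 0) {p m b : ℕ}
    (hzw : (z / w) ^ p = 1) (hm : m ≡ b [MOD p]) : z ^ m / z ^ b = w ^ m / w ^ b := by
  have hpow : z ^ m / w ^ m = z ^ b / w ^ b := by
    simpa only [div_pow] using pow_eq_pow_of_modEq hm hzw
  rw [div_eq_div_iff (pow_ne_zero _ hw) (pow_ne_zero _ hw)] at hpow
  rw [div_eq_div_iff (pow_ne_zero _ hz) (pow_ne_zero _ hw), hpow, mul_comm]

theorem exists_aeval_sum_eq_sum_smul {ι : Type*} (s : Finset ι) {g : Module.End K V}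
    {v : ι → V} {γ χ : ι → K} (hv : ∀ i ∈ s, g.HasEigenvector (γ i) (v i))
    (hχ : ∀ i ∈ s, ∀ j ∈ s, γ i = γ j → χ i = χ j) :
    ∃ q : Polynomial K, Polynomial.aeval g q (∑ i ∈ s, v i) = ∑ i ∈ s, χ i • v i := by
  obtain ⟨q, hq⟩ := (Polynomial.exists_eval_eq_iff (fun i : s => γ i) (fun i : s => χ i)).2
    fun i j => hχ i i.2 j j.2
  refine ⟨q, ?_⟩
  rw [map_sum]
  refine Finset.sum_congr rfl fun i hi => ?_
  rw [Module.End.aeval_apply_of_hasEigenvector (hv i hi), hq ⟨i, hi⟩]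

theorem exists_aeval_pow_apply_eq_pow_apply {f : Module.End K V} (hf : ¬ f.HasEigenvalue 0)
    {x : V} (hx : x ∈ ⨆ μ, f.eigenspace μ) {a b m : ℕ}
    (hdiv : ∀ μ ν, f.HasEigenvalue μ → f.HasEigenvalue ν → μ ^ a = ν ^ a →
      μ ^ m / μ ^ b = ν ^ m / ν ^ b) :
    ∃ q : Polynomial K, Polynomial.aeval (f ^ a) q ((f ^ b) x) = (f ^ m) x := by
  obtain ⟨s, v, hv, rfl⟩ := exists_sum_hasEigenvector_eq hx
  have heig : ∀ μ ∈ s, f.HasEigenvalue μ := fun μ hμ =>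
    Module.End.hasEigenvalue_of_hasEigenvector (hv μ hμ)
  have hpow_ne : ∀ μ ∈ s, μ ^ b ≠ 0 := fun μ hμ =>
    pow_ne_zero b fun h => hf (h ▸ heig μ hμ)
  have hsum : ∀ k, (f ^ k) (∑ μ ∈ s, v μ) = ∑ μ ∈ s, μ ^ k • v μ := fun k => by
    rw [map_sum]
    exact Finset.sum_congr rfl fun μ hμ => (hv μ hμ).pow_apply k
  have hsmul_v : ∀ μ ∈ s, (f ^ a).HasEigenvector (μ ^ a) (μ ^ b • v μ) := fun μ hμ =>
    ⟨Submodule.smul_mem _ _ (Module.End.mem_eigenspace_iff.2 ((hv μ hμ).pow_apply a)),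
      smul_ne_zero (hpow_ne μ hμ) (hv μ hμ).2⟩
  obtain ⟨q, hq⟩ := exists_aeval_sum_eq_sum_smul s hsmul_v
    fun μ hμ ν hν => hdiv μ ν (heig μ hμ) (heig ν hν)
  refine ⟨q, ?_⟩
  rw [hsum, hsum, hq]
  exact Finset.sum_congr rfl fun μ hμ => by rw [smul_smul, div_mul_cancel₀ _ (hpow_ne μ hμ)]

theorem stmt_13_general {f : Module.End K V} (hf : ¬ f.HasEigenvalue 0) (g : V →ₗ[K] W)
    {x : V} (hx : x ∈ ⨆ μ, f.eigenspace μ) {p : ℕ}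
    (hp : ∀ μ ν, f.HasEigenvalue μ → f.HasEigenvalue ν →
      (∃ k : ℕ, 1 ≤ k ∧ (μ / ν) ^ k = 1) → (μ / ν) ^ p = 1)
    {a b : ℕ} (ha : 1 ≤ a) (hab : ∀ n : ℕ, g ((f ^ (a * n + b)) x) = 0)
    {m : ℕ} (hm : m ≡ b [MOD p]) : g ((f ^ m) x) = 0 := by
  have hne : ∀ μ, f.HasEigenvalue μ → μ ≠ 0 := fun μ hμ h => hf (h ▸ hμ)
  obtain ⟨q, hq⟩ := exists_aeval_pow_apply_eq_pow_apply hf hx (a := a) (b := b) (m := m)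
    fun μ ν hμ hν h => by
      have hroot : (μ / ν) ^ a = 1 := by rw [div_pow, h, div_self (pow_ne_zero a (hne ν hν))]
      exact pow_div_pow_eq_of_modEq (hne μ hμ) (hne ν hν) (hp μ ν hμ hν ⟨a, ha, hroot⟩) hm
  rw [← hq]
  refine map_aeval_apply_eq_zero (fun n => ?_) q
  rw [← pow_mul, ← Module.End.mul_apply, ← pow_add, hab]

end Field

section Isometry

variable {𝕜 E : Type*} [RCLike 𝕜] [NormedAddCommGroup E] [InnerProductSpace 𝕜 E]

theorem orthogonal_mem_invtSubmodule_of_linearIsometry (U : E →ₗᵢ[𝕜] E) {W : Submodule 𝕜 E}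
    [FiniteDimensional 𝕜 W] (hW : W ∈ Module.End.invtSubmodule U.toLinearMap) :
    Wᗮ ∈ Module.End.invtSubmodule U.toLinearMap := by
  have hmap : W.map U.toLinearMap = W :=
    Submodule.eq_of_le_of_finrank_eq (Submodule.map_le_iff_le_comap.2 hW)
      (Submodule.equivMapOfInjective U.toLinearMap U.injective W).finrank_eq.symm
  rw [Module.End.mem_invtSubmodule_iff_map_le, Submodule.map_orthogonal, hmap]
  exact inf_le_left

theorem isSemisimple_of_linearIsometry [FiniteDimensional 𝕜 E] (U : E →ₗᵢ[𝕜] E) :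
    Module.End.IsSemisimple U.toLinearMap :=
  Module.End.isSemisimple_iff.2 fun W hW =>
    ⟨Wᗮ, orthogonal_mem_invtSubmodule_of_linearIsometry U hW, W.isCompl_orthogonal⟩

end Isometry

/-- Let `U` be unitary, `P` an orthogonal projection (idempotent and
self-adjoint) and `ψ₀` a vector on a finite-dimensional complex inner product space, and let
`p ≥ 1` be such that for all eigenvalues `λ, μ` of `U`, if `λ/μ` is a root of unity then
`(λ/μ)^p = 1`. If `P U^{a n + b} ψ₀ = 0` for all `n` for some `a ≥ 1`, `b ≥ 0`, then with
`r = b % p` we have `P U^{p n + r} ψ₀ = 0` for all `n`. -/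
theorem stmt_13 {H : Type*} [NormedAddCommGroup H] [InnerProductSpace ℂ H]
    [FiniteDimensional ℂ H]
    (U : H →ₗ[ℂ] H) (hU : ∀ x y : H, ⟪U x, U y⟫_ℂ = ⟪x, y⟫_ℂ)
    (P : H →ₗ[ℂ] H) (hPidem : P ∘ₗ P = P)
    (hPsa : ∀ x y : H, ⟪P x, y⟫_ℂ = ⟪x, P y⟫_ℂ)
    (ψ₀ : H)
    (p : ℕ) (hp : 1 ≤ p)
    (hP : ∀ lam mu : ℂ, Module.End.HasEigenvalue U lam →
      Module.End.HasEigenvalue U mu →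
      (∃ m : ℕ, 1 ≤ m ∧ (lam / mu) ^ m = 1) → (lam / mu) ^ p = 1)
    (a b : ℕ) (ha : 1 ≤ a)
    (hab : ∀ n : ℕ, P ((U ^ (a * n + b)) ψ₀) = 0) :
    ∀ n : ℕ, P ((U ^ (p * n + b % p)) ψ₀) = 0 := by
  have hmem : ψ₀ ∈ ⨆ μ, Module.End.eigenspace U μ :=
    (isSemisimple_of_linearIsometry (U.isometryOfInner hU)).iSup_eigenspace_eq_top ▸
      Submodule.mem_top
  exact fun n => stmt_13_general
    (not_hasEigenvalue_zero_of_injective (U.isometryOfInner hU).injective) P hmem hP ha hab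
    (by simp [Nat.ModEq])
end

section
/- Let N ≥ 2, let x ∈ {0, 1, …, N−1}, let ψ₀ = (1/√N) Σ_{k=0}^{N−1} e_k in ℂ^N, let ξ = (1/√(N−1)) Σ_{k ≠ x} e_k, and let G = (2|ψ₀⟩⟨ψ₀| − I)(2|e_x⟩⟨e_x| − I). Then the linear span of the orbit {G^n ψ₀ : n ∈ ℕ} equals the two-dimensional subspace span{e_x, ξ}. In particular, the projection P = I − |e_x⟩⟨e_x| − |ξ⟩⟨ξ| satisfies P G^n ψ₀ = 0 for every n ∈ ℕ. -/
open Matrix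

/-!
Write `R u = 2|u⟩⟨u| − I`, so that the Grover operator is `R ψ₀ * R eₓ`. For every vector `w`,
`R u w ≡ −w` modulo `u`. Hence `R u` preserves each subspace containing `u`, and the orbit of `ψ₀`
stays inside `span {eₓ, ψ₀}`. Conversely, a subspace containing `ψ₀` and
`R ψ₀ (R eₓ ψ₀)` contains `R eₓ ψ₀ = 2⟨eₓ, ψ₀⟩ eₓ − ψ₀`, and therefore `eₓ`, because the overlap
`⟨eₓ, ψ₀⟩` is nonzero. Finally `span {eₓ, ψ₀} = span {eₓ, ξ}`, since `ψ₀` is a combination of `eₓ`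
and `ξ` in which `ξ` has a nonzero coefficient.
-/

theorem span_range_pow_apply_eq_span_pair {R M : Type*} [Semiring R] [AddCommMonoid M] [Module R M]
    {f : Module.End R M} {u v : M} (hu : u ∈ Submodule.span R {v, f v})
    (hf : ∀ w ∈ Submodule.span R {u, v}, f w ∈ Submodule.span R {u, v}) :
    Submodule.span R (Set.range fun n : ℕ => (f ^ n) v) = Submodule.span R {u, v} := by
  apply le_antisymm
  · rw [Submodule.span_le, Set.range_subset_iff]
    exact fun n => Module.End.pow_apply_mem_of_forall_mem n hf v
      (Submodule.subset_span (by simp))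
  · have orbit_start : {v, f v} ⊆ Set.range fun n : ℕ => (f ^ n) v :=
      Set.pair_subset ⟨0, by simp⟩ ⟨1, by simp⟩
    rw [Submodule.span_le]
    exact Set.pair_subset (Submodule.span_mono orbit_start hu)
      (Submodule.mem_span_of_mem (orbit_start (by simp)))

theorem span_pair_smul_add_smul {K V : Type*} [DivisionRing K] [AddCommGroup V] [Module K V]
    (a : K) {b : K} (hb : b ≠ 0) (u v : V) :
    Submodule.span K {u, a • u + b • v} = Submodule.span K {u, v} := by
  have mem_iff {p : Submodule K V} (hu : u ∈ p) : a • u + b • v ∈ p ↔ v ∈ p := by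
    rw [p.add_mem_iff_right (p.smul_mem a hu), p.smul_mem_iff hb]
  apply le_antisymm <;> refine Submodule.span_le.2 (Set.pair_subset ?_ ?_)
  · exact Submodule.subset_span (by simp)
  · exact (mem_iff (Submodule.subset_span (by simp))).2 (Submodule.subset_span (by simp))
  · exact Submodule.subset_span (by simp)
  · exact (mem_iff (Submodule.subset_span (by simp))).1 (Submodule.subset_span (by simp))

section Reflection

variable {ι K : Type*} [Fintype ι] [DecidableEq ι]

/-- The operator `2|u⟩⟨u| − I`, which for a unit vector `u` is the reflection fixing `u` and
negating its orthogonal complement. It is a matrix on `ι → K`, the inner product being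
`star u ⬝ᵥ v`. -/
def reflectionAbout [Ring K] [Star K] (u : ι → K) : Matrix ι ι K :=
  2 • vecMulVec u (star u) - 1

/-- The Grover operator with initial state `ψ` and target state `e`, up to a global sign: the
product of the reflections about `ψ` and `e`. -/
def groverOperator [Ring K] [Star K] (ψ e : ι → K) : Matrix ι ι K :=
  reflectionAbout ψ * reflectionAbout e

theorem reflectionAbout_mulVec [CommRing K] [Star K] (u w : ι → K) :
    reflectionAbout u *ᵥ w = (2 * (star u ⬝ᵥ w)) • u - w := by
  rw [reflectionAbout, sub_mulVec, one_mulVec, smul_mulVec, vecMulVec_mulVec, op_smul_eq_smul]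
  module

theorem reflectionAbout_mulVec_mem_iff [CommRing K] [Star K] {p : Submodule K (ι → K)}
    {u w : ι → K} (hu : u ∈ p) : reflectionAbout u *ᵥ w ∈ p ↔ w ∈ p := by
  rw [reflectionAbout_mulVec, p.sub_mem_iff_right (p.smul_mem _ hu)]

theorem groverOperator_mulVec_mem [CommRing K] [Star K] {p : Submodule K (ι → K)}
    {ψ e w : ι → K} (hψ : ψ ∈ p) (he : e ∈ p) (hw : w ∈ p) : groverOperator ψ e *ᵥ w ∈ p := by
  rwa [groverOperator, ← mulVec_mulVec, reflectionAbout_mulVec_mem_iff hψ,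
    reflectionAbout_mulVec_mem_iff he]

theorem mem_of_groverOperator_mulVec_mem [Field K] [NeZero (2 : K)] [Star K]
    {p : Submodule K (ι → K)} {ψ e : ι → K} (h : star e ⬝ᵥ ψ ≠ 0) (hψ : ψ ∈ p)
    (hGψ : groverOperator ψ e *ᵥ ψ ∈ p) : e ∈ p := by
  rwa [groverOperator, ← mulVec_mulVec, reflectionAbout_mulVec_mem_iff hψ, reflectionAbout_mulVec,
    p.sub_mem_iff_left hψ, p.smul_mem_iff (mul_ne_zero two_ne_zero h)] at hGψ

theorem span_orbit_groverOperator [Field K] [NeZero (2 : K)] [Star K] {ψ e : ι → K}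
    (h : star e ⬝ᵥ ψ ≠ 0) :
    Submodule.span K {v | ∃ n : ℕ, v = groverOperator ψ e ^ n *ᵥ ψ} =
      Submodule.span K {e, ψ} := by
  have orbit_eq : {v | ∃ n : ℕ, v = groverOperator ψ e ^ n *ᵥ ψ} =
      Set.range fun n : ℕ => (toLin' (groverOperator ψ e) ^ n) ψ := by
    ext v
    simp only [← toLin'_pow, toLin'_apply, Set.mem_ofPred_eq, Set.mem_range, eq_comm]
  rw [orbit_eq]
  apply span_range_pow_apply_eq_span_pair
  · exact mem_of_groverOperator_mulVec_mem h (Submodule.subset_span (by simp))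
      (Submodule.subset_span (by simp))
  · exact fun w => groverOperator_mulVec_mem (Submodule.subset_span (by simp))
      (Submodule.subset_span (by simp))

theorem one_sub_vecMulVec_sub_vecMulVec_mulVec_eq_zero [CommRing K] [StarRing K] {u v w : ι → K}
    (hu : star u ⬝ᵥ u = 1) (hv : star v ⬝ᵥ v = 1) (huv : star u ⬝ᵥ v = 0)
    (hw : w ∈ Submodule.span K {u, v}) :
    (1 - vecMulVec u (star u) - vecMulVec v (star v)) *ᵥ w = 0 := by
  have hvu : star v ⬝ᵥ u = 0 := by rw [star_dotProduct, huv, star_zero]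
  obtain ⟨a, b, rfl⟩ := Submodule.mem_span_pair.1 hw
  simp [sub_mulVec, vecMulVec_mulVec, hu, hv, huv, hvu]

end Reflection

section UniformState

open Finset

variable {ι : Type*} (𝕜 : Type*) [RCLike 𝕜]

/-- The uniform superposition `(1/√|s|) Σ_{k ∈ s} e_k` of the basis vectors indexed by `s`; it is
the zero vector when `s` is empty. -/
noncomputable def uniformState (s : Finset ι) : ι → 𝕜 :=
  ((√(#s) : ℝ) : 𝕜)⁻¹ • (s : Set ι).indicator 1

theorem sqrt_card_smul_uniformState (s : Finset ι) :
    ((√(#s) : ℝ) : 𝕜) • uniformState 𝕜 s = (s : Set ι).indicator 1 := by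
  obtain rfl | hs := s.eq_empty_or_nonempty
  · simp [Pi.zero_def]
  · exact smul_inv_smul₀ (by simpa using hs.ne_empty) _

theorem uniformState_singleton [DecidableEq ι] (x : ι) : uniformState 𝕜 {x} = Pi.single x 1 := by
  ext k
  simp [uniformState, Pi.single_apply]

theorem uniformState_union [DecidableEq ι] {s t : Finset ι} (h : Disjoint s t) :
    uniformState 𝕜 (s ∪ t) = ((√(#s) : ℝ) / (√(#(s ∪ t)) : ℝ) : 𝕜) • uniformState 𝕜 s +
      ((√(#t) : ℝ) / (√(#(s ∪ t)) : ℝ) : 𝕜) • uniformState 𝕜 t := by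
  rw [div_eq_inv_mul, div_eq_inv_mul, mul_smul, mul_smul, sqrt_card_smul_uniformState,
    sqrt_card_smul_uniformState, ← smul_add, uniformState, coe_union,
    Set.indicator_union_of_disjoint (disjoint_coe.2 h)]
  rfl

variable [Fintype ι]

theorem star_uniformState_dotProduct_uniformState [DecidableEq ι] (s t : Finset ι) :
    star (uniformState 𝕜 s) ⬝ᵥ uniformState 𝕜 t =
      #(s ∩ t) / ((√(#s) : ℝ) * (√(#t) : ℝ)) := by
  have indicator_dotProduct :
      star ((s : Set ι).indicator (1 : ι → 𝕜)) ⬝ᵥ (t : Set ι).indicator 1 = #(s ∩ t) := by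
    simp [dotProduct, Set.indicator_apply, apply_ite, ← ite_and, ← mem_inter, inter_comm]
  rw [uniformState, uniformState, star_smul, smul_dotProduct, dotProduct_smul,
    indicator_dotProduct, star_inv₀, RCLike.star_def, RCLike.conj_ofReal, smul_eq_mul, smul_eq_mul]
  ring

theorem star_uniformState_dotProduct_self {s : Finset ι} (hs : s.Nonempty) :
    star (uniformState 𝕜 s) ⬝ᵥ uniformState 𝕜 s = 1 := by
  classical
  rw [star_uniformState_dotProduct_uniformState, inter_self, ← RCLike.ofReal_mul,
    Real.mul_self_sqrt (by positivity), RCLike.ofReal_natCast,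
    div_self (by simpa using hs.ne_empty)]

theorem star_uniformState_dotProduct_of_disjoint {s t : Finset ι} (h : Disjoint s t) :
    star (uniformState 𝕜 s) ⬝ᵥ uniformState 𝕜 t = 0 := by
  classical
  simp [star_uniformState_dotProduct_uniformState, disjoint_iff_inter_eq_empty.1 h]

theorem star_uniformState_dotProduct_ne_zero [DecidableEq ι] {s t : Finset ι}
    (h : (s ∩ t).Nonempty) :
    star (uniformState 𝕜 s) ⬝ᵥ uniformState 𝕜 t ≠ 0 := by
  have hs : s.Nonempty := h.mono inter_subset_left
  have ht : t.Nonempty := h.mono inter_subset_right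
  simp [star_uniformState_dotProduct_uniformState, h.ne_empty, hs.ne_empty, ht.ne_empty]

theorem stmt_17_general [DecidableEq ι] {s : Finset ι} (hs : s.Nonempty) (hsc : sᶜ.Nonempty) :
    Submodule.span 𝕜 {v | ∃ n : ℕ, v =
        groverOperator (uniformState 𝕜 univ) (uniformState 𝕜 s) ^ n *ᵥ uniformState 𝕜 univ} =
      Submodule.span 𝕜 {uniformState 𝕜 s, uniformState 𝕜 sᶜ} ∧
    ∀ n : ℕ, (1 - vecMulVec (uniformState 𝕜 s) (star (uniformState 𝕜 s)) -
        vecMulVec (uniformState 𝕜 sᶜ) (star (uniformState 𝕜 sᶜ))) *ᵥ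
      (groverOperator (uniformState 𝕜 univ) (uniformState 𝕜 s) ^ n *ᵥ uniformState 𝕜 univ) = 0 := by
  have overlap_ne_zero : star (uniformState 𝕜 s) ⬝ᵥ uniformState 𝕜 univ ≠ 0 :=
    star_uniformState_dotProduct_ne_zero 𝕜 (by simpa using hs)
  have sqrt_ratio_ne_zero : ((√(#sᶜ) : ℝ) / (√(#(univ : Finset ι)) : ℝ) : 𝕜) ≠ 0 := by
    have : Nonempty ι := hs.to_type
    simp [hsc.ne_empty]
  have span_pair_eq : Submodule.span 𝕜 {uniformState 𝕜 s, uniformState 𝕜 univ} =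
      Submodule.span 𝕜 {uniformState 𝕜 s, uniformState 𝕜 sᶜ} := by
    rw [← union_compl s, uniformState_union 𝕜 disjoint_compl_right, union_compl,
      span_pair_smul_add_smul _ sqrt_ratio_ne_zero]
  have span_orbit_eq := (span_orbit_groverOperator overlap_ne_zero).trans span_pair_eq
  exact ⟨span_orbit_eq, fun n => one_sub_vecMulVec_sub_vecMulVec_mulVec_eq_zero
    (star_uniformState_dotProduct_self 𝕜 hs) (star_uniformState_dotProduct_self 𝕜 hsc)
    (star_uniformState_dotProduct_of_disjoint 𝕜 disjoint_compl_right)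
    (span_orbit_eq ▸ Submodule.subset_span ⟨n, rfl⟩)⟩

end UniformState

/-- Let `ψ₀` be the uniform superposition in `ℂ^N`, `x` a marked index,
`ξ = (1/√(N−1)) Σ_{k ≠ x} e_k`, and `G = (2|ψ₀⟩⟨ψ₀| − I)(2|e_x⟩⟨e_x| − I)` the Grover
iteration (up to a global sign) as an `N × N` complex matrix. Then the span of the orbit
`{G^n ψ₀ : n ∈ ℕ}` equals `span{e_x, ξ}`, and the projection
`P = I − |e_x⟩⟨e_x| − |ξ⟩⟨ξ|` satisfies `P G^n ψ₀ = 0` for all `n`. -/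
theorem stmt_17 (N : ℕ) (hN : 2 ≤ N) (x : Fin N)
    (ψ₀ : Fin N → ℂ) (hψ₀ : ψ₀ = fun _ => (1 : ℂ) / (Real.sqrt N : ℂ))
    (ξ : Fin N → ℂ)
    (hξ : ξ = fun k => if k = x then 0 else (1 : ℂ) / (Real.sqrt (N - 1) : ℂ))
    (G : Matrix (Fin N) (Fin N) ℂ)
    (hG : G = (2 • vecMulVec ψ₀ (star ψ₀) - 1) *
              (2 • vecMulVec (Pi.single x 1) (star (Pi.single x (1 : ℂ))) - 1))
    (P : Matrix (Fin N) (Fin N) ℂ)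
    (hP : P = 1 - vecMulVec (Pi.single x 1) (star (Pi.single x (1 : ℂ)))
            - vecMulVec ξ (star ξ)) :
    Submodule.span ℂ {v : Fin N → ℂ | ∃ n : ℕ, v = (G ^ n) *ᵥ ψ₀} =
      Submodule.span ℂ {Pi.single x (1 : ℂ), ξ} ∧
    ∀ n : ℕ, P *ᵥ ((G ^ n) *ᵥ ψ₀) = 0 := by
  have ψ₀_eq : ψ₀ = uniformState ℂ Finset.univ := by
    ext k
    simp [hψ₀, uniformState]
  have ξ_eq : ξ = uniformState ℂ {x}ᶜ := by
    ext k
    have : 1 ≤ N := by lia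
    simp [hξ, uniformState, Set.indicator_apply, Finset.card_compl, Nat.cast_sub this]
  have compl_nonempty : ({x}ᶜ : Finset (Fin N)).Nonempty := by
    rw [← Finset.card_pos, Finset.card_compl, Fintype.card_fin, Finset.card_singleton]
    lia
  rw [hP, hG, ξ_eq, ψ₀_eq, ← uniformState_singleton]
  exact stmt_17_general ℂ (Finset.singleton_nonempty x) compl_nonempty
end
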